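/- Let m ≥ 2, d ≥ 1, z₁ ∈ ℝ, and let G be a positive definite Hermitian md×md complex matrix. Then G·M_d is not Hermitian. (In particular, if the Gram matrix of the generating singular elements is used as the Gram matrix of the A-model, the resulting minimal operator of the A-model fails to be symmetric.) -/

import Mathlib

open Matrix ComplexOrder

/-- The `m × m` matrix `M = z₁·I + N`, where `N` is the upper-shift matrix. -/
noncomputable def shiftM (m : ℕ) (z₁ : ℝ) : Matrix (Fin m) (Fin m) ℂ :=
  Matrix.of fun j j' : Fin m =>
    (if j = j' then (z₁ : ℂ) else 0) + (if (j' : ℕ) = (j : ℕ) + 1 then 1 else 0)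

/-- The `md × md` block-diagonal matrix consisting of `d` copies of `M`. -/
noncomputable def Md (m d : ℕ) (z₁ : ℝ) :
    Matrix (Fin d × Fin m) (Fin d × Fin m) ℂ :=
  Matrix.of fun p q : Fin d × Fin m =>
    if p.1 = q.1 then shiftM m z₁ p.2 q.2 else 0

/-!
Since `z₁` is real and `G` is Hermitian, `G * M_d` is Hermitian exactly when `G * (I ⊗ N)` is.
Right multiplication by `I ⊗ N` shifts the columns of each block one place to the right, filling the
first column with zeros. If the product is Hermitian, the first row of each block vanishes as well,
and its second entry is the upper left entry of the corresponding block of `G`. For a diagonal block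
this is a diagonal entry of `G`, which is positive when `G` is positive definite.
-/

open scoped Kronecker

theorem isHermitian_mul_smul_one_add_iff {n R : Type*} [Fintype n] [DecidableEq n] [CommRing R]
    [StarRing R] {G A : Matrix n n R} {c : R} (hG : G.IsHermitian) (hc : IsSelfAdjoint c) :
    (G * (c • 1 + A)).IsHermitian ↔ (G * A).IsHermitian := by
  have hcG : (c • G).IsHermitian := hG.smul hc
  rw [mul_add, mul_smul_comm, mul_one]
  exact ⟨fun h ↦ by simpa using h.sub hcG, hcG.add⟩

theorem mul_one_kronecker_apply {l n k k' R : Type*} [Fintype n] [DecidableEq n] [Fintype k]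
    [NonAssocSemiring R] (A : Matrix l (n × k) R) (B : Matrix k k' R) (p : l) (σ : n) (j : k') :
    (A * ((1 : Matrix n n R) ⊗ₖ B)) p (σ, j) = ∑ i, A p (σ, i) * B i j := by
  simp [mul_apply, Fintype.sum_prod_type_right, one_apply]

/-- The upper-shift matrix `N`, with ones on the superdiagonal and zeros elsewhere. It is the
nilpotent part of `shiftM`. The superdiagonal condition is stated in `ℕ`, because addition in
`Fin m` wraps around. -/
def upperShift (m : ℕ) (R : Type*) [Zero R] [One R] : Matrix (Fin m) (Fin m) R :=
  Matrix.of fun i j ↦ if (j : ℕ) = i + 1 then 1 else 0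

theorem Md_eq_smul_one_add_one_kronecker (m d : ℕ) (z₁ : ℝ) :
    Md m d z₁ = (z₁ : ℂ) • 1 + (1 : Matrix (Fin d) (Fin d) ℂ) ⊗ₖ upperShift m ℂ := by
  ext ⟨σ, i⟩ ⟨τ, j⟩
  by_cases hστ : σ = τ <;> simp [Md, shiftM, upperShift, one_apply, hστ]

section UpperShift

variable {l n R : Type*} {m : ℕ} [Fintype n] [DecidableEq n] [NonAssocSemiring R]

theorem mul_one_kronecker_upperShift_apply_zero (A : Matrix l (n × Fin m) R) (p : l) (σ : n)
    {j : Fin m} (hj : (j : ℕ) = 0) :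
    (A * ((1 : Matrix n n R) ⊗ₖ upperShift m R)) p (σ, j) = 0 := by
  simp [mul_one_kronecker_apply, upperShift, hj]

theorem mul_one_kronecker_upperShift_apply_succ (A : Matrix l (n × Fin m) R) (p : l) (σ : n)
    {j k : Fin m} (hjk : (k : ℕ) = j + 1) :
    (A * ((1 : Matrix n n R) ⊗ₖ upperShift m R)) p (σ, k) = A p (σ, j) := by
  simp [mul_one_kronecker_apply, upperShift, hjk, ← Fin.ext_iff]

theorem apply_eq_zero_of_isHermitian_mul_one_kronecker_upperShift [StarRing R]
    {G : Matrix (n × Fin m) (n × Fin m) R}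
    (h : (G * ((1 : Matrix n n R) ⊗ₖ upperShift m R)).IsHermitian) (σ τ : n) {i j : Fin m}
    (hi : (i : ℕ) = 0) (hj : (j : ℕ) + 1 < m) : G (σ, i) (τ, j) = 0 := by
  let k : Fin m := ⟨j + 1, hj⟩
  rw [← mul_one_kronecker_upperShift_apply_succ G (σ, i) τ (k := k) rfl, ← h.apply,
    mul_one_kronecker_upperShift_apply_zero G (τ, k) σ hi, star_zero]

end UpperShift

theorem not_isHermitian_mul_Md_of_posDef_general {m d : ℕ} (z₁ : ℝ)
    {G : Matrix (Fin d × Fin m) (Fin d × Fin m) ℂ} (hG : G.IsHermitian) {σ τ : Fin d}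
    {i j : Fin m} (hi : (i : ℕ) = 0) (hj : (j : ℕ) + 1 < m) (hGij : G (σ, i) (τ, j) ≠ 0) :
    ¬ (G * Md m d z₁).IsHermitian := by
  have hz : IsSelfAdjoint (z₁ : ℂ) := Complex.conj_ofReal z₁
  rw [Md_eq_smul_one_add_one_kronecker, isHermitian_mul_smul_one_add_iff hG hz]
  exact fun h ↦ hGij (apply_eq_zero_of_isHermitian_mul_one_kronecker_upperShift h σ τ hi hj)

/-- If `m ≥ 2`, `d ≥ 1` and `G` is a positive definite (Hermitian) `md × md` matrix,
then `G·M_d` is not Hermitian. -/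
theorem not_isHermitian_mul_Md_of_posDef (m d : ℕ) (hm : 2 ≤ m) (hd : 1 ≤ d) (z₁ : ℝ)
    (G : Matrix (Fin d × Fin m) (Fin d × Fin m) ℂ) (hG : G.PosDef) :
    ¬ (G * Md m d z₁).IsHermitian := by
  let i₀ : Fin m := ⟨0, by lia⟩
  exact not_isHermitian_mul_Md_of_posDef_general z₁ hG.isHermitian (σ := ⟨0, hd⟩)
    (i := i₀) (j := i₀) rfl hm hG.diag_pos.ne'
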